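/- Let ℓ = exp, ν ∈ (0,1], suppose γ := max_{‖λ‖₁=1} min_i (−(Aλ)_i) satisfies γ ∈ (0,1), and let {λ_t} be boosting iterates with AdaBoost steps α_t = α_ada_t := (ν/2)·ln((1+γ_t)/(1−γ_t)). Let θ ≥ 0 with θ < γ/(1+γ). Then for every t ≥ 1 (with λ_t ≠ 0): (1/m)·Σ_{i=1}^m 1[(−(Aλ_t)_i)/‖λ_t‖₁ < θ] ≤ exp(−t·ν·(γ² − θγ(2+γ))/2). In particular, if θ < γ/(2+γ) and t > 2·ln(m)/(ν·(γ² − θγ(2+γ))), then M(Aλ_t) := min_{k∈[m]} (−(Aλ_t)_k)/‖λ_t‖₁ ≥ θ. -/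

import Mathlib

open Real Finset

noncomputable section

/-- The property that `C` is a valid curvature constant at level `z`:
`C ≥ 1` and `C⁻¹ ≤ eˣ / ℓ⁽ⁱ⁾(x) ≤ C` for all `x ≤ z` and `i ∈ {0,1,2}`. -/
def CBound (ℓ : ℝ → ℝ) (z C : ℝ) : Prop :=
  1 ≤ C ∧ ∀ x ≤ z, ∀ i ≤ 2,
    C⁻¹ ≤ Real.exp x / iteratedDeriv i ℓ x ∧ Real.exp x / iteratedDeriv i ℓ x ≤ C

/-- `C_ℓ(z)`: the least valid curvature constant at level `z`. -/
def Cconst (ℓ : ℝ → ℝ) (z : ℝ) : ℝ := sInf {C : ℝ | CBound ℓ z C}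

/-- Membership in the class `𝕃`: positive, twice continuously differentiable,
strictly convex, and `C_ℓ(z) < ∞` (i.e. some valid constant exists) for every `z`. -/
def MemL (ℓ : ℝ → ℝ) : Prop :=
  (∀ x, 0 < ℓ x) ∧ ContDiff ℝ 2 ℓ ∧ StrictConvexOn ℝ Set.univ ℓ ∧
    ∀ z : ℝ, ∃ C : ℝ, CBound ℓ z C

/-- Membership in `𝕃_∞`: in `𝕃` and moreover `C_ℓ(z) → 1` as `z → −∞`. -/
def MemLinf (ℓ : ℝ → ℝ) : Prop :=
  MemL ℓ ∧ Filter.Tendsto (Cconst ℓ) Filter.atBot (nhds 1)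

variable {m n : ℕ}

/-- The empirical risk `L(Aλ) = (1/m) Σᵢ ℓ((Aλ)ᵢ)`. -/
def LL (ℓ : ℝ → ℝ) (A : Matrix (Fin m) (Fin n) ℝ) (lam : Fin n → ℝ) : ℝ :=
  (∑ i, ℓ (A.mulVec lam i)) / m

/-- The gradient vector `∇L(Aλ)`, with `i`-th entry `ℓ'((Aλ)ᵢ)/m`. -/
def gradL (ℓ : ℝ → ℝ) (A : Matrix (Fin m) (Fin n) ℝ) (lam : Fin n → ℝ) : Fin m → ℝ :=
  fun i => deriv ℓ (A.mulVec lam i) / m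

/-- `‖Aᵀ ∇L(Aλ)‖_∞`. -/
def gInf (ℓ : ℝ → ℝ) (A : Matrix (Fin m) (Fin n) ℝ) (lam : Fin n → ℝ) : ℝ :=
  ⨆ j : Fin n, |∑ i, gradL ℓ A lam i * A i j|

/-- `‖∇L(Aλ)‖₁`. -/
def gOne (ℓ : ℝ → ℝ) (A : Matrix (Fin m) (Fin n) ℝ) (lam : Fin n → ℝ) : ℝ :=
  ∑ i, |gradL ℓ A lam i|

/-- `γ̂ = ‖Aᵀ∇L(Aλ)‖_∞ / ‖∇L(Aλ)‖₁`. -/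
def gammaHat (ℓ : ℝ → ℝ) (A : Matrix (Fin m) (Fin n) ℝ) (lam : Fin n → ℝ) : ℝ :=
  gInf ℓ A lam / gOne ℓ A lam

/-- `C = C_ℓ(ℓ⁻¹(m · L(Aλ)))`. -/
def Cstep (ℓ : ℝ → ℝ) (A : Matrix (Fin m) (Fin n) ℝ) (lam : Fin n → ℝ) : ℝ :=
  Cconst ℓ (Function.invFun ℓ ((m : ℝ) * LL ℓ A lam))

/-- The (minimum `l¹`) margin `M(Aλ) = min_k (−(Aλ)_k) / ‖λ‖₁`. -/
def margin (A : Matrix (Fin m) (Fin n) ℝ) (lam : Fin n → ℝ) : ℝ :=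
  ⨅ k : Fin m, (-(A.mulVec lam k)) / (∑ j, |lam j|)

/-- The maximum margin `γ = max_{‖λ‖₁=1} min_i (−(Aλ)ᵢ)`. -/
def gammaMax (A : Matrix (Fin m) (Fin n) ℝ) : ℝ :=
  sSup {r : ℝ | ∃ lam : Fin n → ℝ, (∑ j, |lam j|) = 1 ∧ r = ⨅ i : Fin m, -(A.mulVec lam i)}

/-- Boosting iterates: `λ₀ = 0`, `λ_t = λ_{t-1} + α_t • v_t` where `v_t` is a signed
standard basis vector satisfying `∇L(Aλ_{t-1})ᵀ A v_t = −‖Aᵀ∇L(Aλ_{t-1})‖_∞`. -/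
def IsBoostSeq (ℓ : ℝ → ℝ) (A : Matrix (Fin m) (Fin n) ℝ)
    (lam : ℕ → Fin n → ℝ) (α : ℕ → ℝ) (v : ℕ → Fin n → ℝ) : Prop :=
  lam 0 = 0 ∧
  (∀ t : ℕ, 1 ≤ t → lam t = lam (t-1) + α t • v t) ∧
  (∀ t : ℕ, 1 ≤ t → ∃ s : ℝ, (s = 1 ∨ s = -1) ∧ ∃ j : Fin n, v t = s • (Pi.single j (1:ℝ) : Fin n → ℝ)) ∧
  (∀ t : ℕ, 1 ≤ t →
    ∑ i, gradL ℓ A (lam (t-1)) i * A.mulVec (v t) i = - gInf ℓ A (lam (t-1)))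

/-- The quantity `Υ_ν(γ)`. -/
def Upsilon (ν γ : ℝ) : ℝ :=
  ((2/ν) * Real.log 2 - (2/ν) * Real.log ((1+γ) ^ (1-ν) + (1-γ) ^ (1-ν))
      - Real.log (1-γ^2)) /
    (Real.log (1+γ) - Real.log (1-γ))


lemma aux_scalar {γ g θ ν : ℝ} (hγ0 : 0 < γ) (hγg : γ ≤ g) (hg1 : g < 1) (hθ0 : 0 ≤ θ)
    (hθ : θ ≤ γ) (hν0 : 0 < ν) (hν1 : ν ≤ 1) :
    ((1 - g)/2 * Real.exp ((ν/2) * Real.log ((1+g)/(1-g))) +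
      (1 + g)/2 * Real.exp (-((ν/2) * Real.log ((1+g)/(1-g))))) *
      Real.exp (θ * ((ν/2) * Real.log ((1+g)/(1-g)))) ≤
    Real.exp (-ν * (γ^2 - θ * γ * (2 + γ)) / 2) := by
  have h1g : 0 < 1 - g := by linarith
  have h1g' : 0 < 1 + g := by linarith
  have h1γ : 0 < 1 - γ := by linarith
  have h1γ' : 0 < 1 + γ := by linarith
  rw [Real.log_div h1g'.ne' h1g.ne']
  set a := Real.log (1+g) with ha
  set b := Real.log (1-g) with hb
  have ea : Real.exp a = 1 + g := Real.exp_log h1g'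
  have eb : Real.exp b = 1 - g := Real.exp_log h1g
  have hpow : (1 - g)/2 * Real.exp ((ν/2) * (a-b)) + (1 + g)/2 * Real.exp (-((ν/2) * (a-b)))
      ≤ Real.exp (ν * ((a+b)/2)) := by
    have hc := (Real.concaveOn_rpow hν0.le hν1).2
      (Set.mem_Ici.2 (Real.exp_pos ((a-b)/2)).le)
      (Set.mem_Ici.2 (Real.exp_pos (-((a-b)/2))).le)
      (by linarith : 0 ≤ (1-g)/2) (by linarith : 0 ≤ (1+g)/2) (by ring)
    simp only [smul_eq_mul] at hc
    have hS : (1-g)/2 * Real.exp ((a-b)/2) + (1+g)/2 * Real.exp (-((a-b)/2))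
        = Real.exp ((a+b)/2) := by
      rw [← ea, ← eb]
      have e1 : Real.exp b * Real.exp ((a-b)/2) = Real.exp ((a+b)/2) := by
        rw [← Real.exp_add]; congr 1; ring
      have e2 : Real.exp a * Real.exp (-((a-b)/2)) = Real.exp ((a+b)/2) := by
        rw [← Real.exp_add]; congr 1; ring
      linarith
    rw [hS, ← Real.exp_mul, ← Real.exp_mul, ← Real.exp_mul] at hc
    rw [show (ν/2) * (a-b) = (a-b)/2 * ν by ring,
      show -((a-b)/2 * ν) = -((a-b)/2) * ν by ring, show ν * ((a+b)/2) = (a+b)/2 * ν by ring]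
    exact hc
  have hA : Real.log (1+g) - Real.log (1+γ) ≤ (g-γ)/(1+γ) := by
    rw [← Real.log_div h1g'.ne' h1γ'.ne']
    refine (Real.log_le_sub_one_of_pos (by positivity)).trans (le_of_eq ?_)
    field_simp; ring
  have hB : Real.log (1-g) - Real.log (1-γ) ≤ -(g-γ)/(1-γ) := by
    rw [← Real.log_div h1g.ne' h1γ.ne']
    refine (Real.log_le_sub_one_of_pos (by positivity)).trans (le_of_eq ?_)
    field_simp; ring
  have hm : (1+θ) * ((g-γ)/(1+γ)) + (1-θ) * (-(g-γ)/(1-γ)) ≤ 0 := by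
    have : (1+θ) * ((g-γ)/(1+γ)) + (1-θ) * (-(g-γ)/(1-γ))
        = -(2 * ((g-γ) * (γ-θ)) / ((1+γ)*(1-γ))) := by field_simp; ring
    rw [this]
    have := mul_nonneg (sub_nonneg.2 hγg) (sub_nonneg.2 hθ)
    have : 0 ≤ 2 * ((g-γ) * (γ-θ)) / ((1+γ)*(1-γ)) := by positivity
    linarith
  have hL1 : Real.log (1+γ) ≤ γ := by
    have := Real.log_le_sub_one_of_pos h1γ'; linarith
  have hL2 : Real.log (1+γ) + Real.log (1-γ) ≤ -γ^2 := by
    rw [← Real.log_mul h1γ'.ne' h1γ.ne']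
    have := Real.log_le_sub_one_of_pos (mul_pos h1γ' h1γ); linarith
  have hθ1 : 0 ≤ 1 - θ := by linarith
  have k1 := mul_le_mul_of_nonneg_left hA (by linarith : (0:ℝ) ≤ 1 + θ)
  have k2 := mul_le_mul_of_nonneg_left hB hθ1
  have k3 := mul_le_mul_of_nonneg_left hL2 hθ1
  have k4 := mul_le_mul_of_nonneg_left hL1 (by linarith : (0:ℝ) ≤ 2 * θ)
  have key : (1+θ) * a + (1-θ) * b ≤ -(γ^2 - θ * γ * (2 + γ)) := by
    rw [ha, hb]; linarith
  calc _ ≤ Real.exp (ν * ((a+b)/2)) * Real.exp (θ * ((ν/2) * (a-b))) :=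
        mul_le_mul_of_nonneg_right hpow (Real.exp_pos _).le
    _ = Real.exp (ν/2 * ((1+θ) * a + (1-θ) * b)) := by
        rw [← Real.exp_add]; congr 1; ring
    _ ≤ _ := by
        apply Real.exp_le_exp.2
        have := mul_le_mul_of_nonneg_left key (by linarith : (0:ℝ) ≤ ν/2)
        linarith

lemma aux_grad_pos {m n : ℕ} (hm : 0 < m) (A : Matrix (Fin m) (Fin n) ℝ) (l : Fin n → ℝ)
    (i : Fin m) : 0 < gradL Real.exp A l i := by
  simp only [gradL, Real.deriv_exp]
  have : (0:ℝ) < m := by exact_mod_cast hm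
  positivity

lemma aux_gOne {m n : ℕ} (hm : 0 < m) (A : Matrix (Fin m) (Fin n) ℝ) (l : Fin n → ℝ) :
    gOne Real.exp A l = ∑ i, gradL Real.exp A l i :=
  Finset.sum_congr rfl fun i _ => abs_of_pos (aux_grad_pos hm A l i)

lemma aux_gOne_pos {m n : ℕ} (hm : 0 < m) (A : Matrix (Fin m) (Fin n) ℝ) (l : Fin n → ℝ) :
    0 < gOne Real.exp A l := by
  rw [aux_gOne hm]
  have : Nonempty (Fin m) := ⟨⟨0, hm⟩⟩
  exact Finset.sum_pos (fun i _ => aux_grad_pos hm A l i) Finset.univ_nonempty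

lemma aux_gInf_ge {m n : ℕ} (A : Matrix (Fin m) (Fin n) ℝ) (l : Fin n → ℝ) (j : Fin n) :
    |∑ i, gradL Real.exp A l i * A i j| ≤ gInf Real.exp A l :=
  le_ciSup (f := fun j => |∑ i, gradL Real.exp A l i * A i j|) (Set.finite_range _).bddAbove j

lemma aux_gInf_nonneg {m n : ℕ} (A : Matrix (Fin m) (Fin n) ℝ) (l : Fin n → ℝ) :
    0 ≤ gInf Real.exp A l := Real.iSup_nonneg fun _ => abs_nonneg _

lemma aux_weak {m n : ℕ} (hm : 0 < m) (A : Matrix (Fin m) (Fin n) ℝ) (l : Fin n → ℝ) :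
    gammaMax A ≤ gammaHat Real.exp A l := by
  have hp := aux_gOne_pos hm A l
  apply Real.sSup_le
  · rintro r ⟨μ, hμ, rfl⟩
    unfold gammaHat
    rw [le_div_iff₀ hp, aux_gOne hm, Finset.mul_sum]
    calc ∑ i, (⨅ i : Fin m, -(A.mulVec μ i)) * gradL Real.exp A l i
        ≤ ∑ i, -(A.mulVec μ i) * gradL Real.exp A l i := by
          refine Finset.sum_le_sum fun i _ => ?_
          exact mul_le_mul_of_nonneg_right
            (ciInf_le (f := fun i => -(A.mulVec μ i)) (Set.finite_range _).bddBelow i)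
            (aux_grad_pos hm A l i).le
      _ = ∑ j, -μ j * ∑ i, gradL Real.exp A l i * A i j := by
          simp only [Matrix.mulVec, dotProduct, Finset.mul_sum, neg_mul, Finset.sum_mul,
            Finset.sum_neg_distrib]
          rw [Finset.sum_comm]
          congr 1
          refine Finset.sum_congr rfl fun _ _ => Finset.sum_congr rfl fun _ _ => by ring
      _ ≤ ∑ j, |μ j| * gInf Real.exp A l := by
          refine Finset.sum_le_sum fun j _ => ?_
          refine (le_abs_self _).trans ?_
          rw [abs_mul, abs_neg]
          exact mul_le_mul_of_nonneg_left (aux_gInf_ge A l j) (abs_nonneg _)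
      _ = _ := by rw [← Finset.sum_mul, hμ, one_mul]
  · exact div_nonneg (aux_gInf_nonneg A l) hp.le

lemma aux_gammaMax_ge {m n : ℕ} (hm : 0 < m) (A : Matrix (Fin m) (Fin n) ℝ)
    (hA : ∀ i j, |A i j| ≤ 1) (j : Fin n) (s : ℝ) (hs : |s| = 1)
    (h : ∀ i, s * A i j = 1) : 1 ≤ gammaMax A := by
  have : Nonempty (Fin m) := ⟨⟨0, hm⟩⟩
  apply le_csSup
  · refine ⟨1, ?_⟩
    rintro r ⟨μ, hμ, rfl⟩
    refine (ciInf_le (f := fun i => -(A.mulVec μ i)) (Set.finite_range _).bddBelow ⟨0, hm⟩).trans ?_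
    refine (neg_le_abs _).trans ?_
    rw [← hμ]
    simp only [Matrix.mulVec, dotProduct]
    refine (Finset.abs_sum_le_sum_abs _ _).trans (Finset.sum_le_sum fun k _ => ?_)
    rw [abs_mul]
    exact mul_le_of_le_one_left (abs_nonneg _) (hA _ _)
  · refine ⟨Pi.single j (-s), ?_, ?_⟩
    · rw [Finset.sum_eq_single j]
      · simp [hs]
      · intro k _ hk; simp [hk]
      · simp
    · have : ∀ i, -(A.mulVec (Pi.single j (-s)) i) = 1 := by
        intro i
        rw [← h i]
        simp [mul_comm]
      simp only [this, ciInf_const]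

lemma aux_lt_one {m n : ℕ} (hm : 0 < m) (hn : 0 < n) (A : Matrix (Fin m) (Fin n) ℝ)
    (hA : ∀ i j, |A i j| ≤ 1) (hγ : gammaMax A < 1) (l : Fin n → ℝ) :
    gammaHat Real.exp A l < 1 := by
  have : Nonempty (Fin n) := ⟨⟨0, hn⟩⟩
  by_contra hcon
  push Not at hcon
  unfold gammaHat at hcon
  rw [one_le_div (aux_gOne_pos hm A l), aux_gOne hm] at hcon
  obtain ⟨j, hj⟩ := exists_eq_ciSup_of_finite (f := fun j => |∑ i, gradL Real.exp A l i * A i j|)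
  have hj' : ∑ i, gradL Real.exp A l i ≤ |∑ i, gradL Real.exp A l i * A i j| := by
    refine hcon.trans (le_of_eq hj.symm)
  have main : ∀ s : ℝ, |s| = 1 → ∑ i, gradL Real.exp A l i ≤
      s * ∑ i, gradL Real.exp A l i * A i j → False := by
    intro s hs h
    have hle : ∀ i, s * A i j ≤ 1 := fun i => by
      refine (le_abs_self _).trans ?_
      rw [abs_mul, hs, one_mul]; exact hA i j
    refine absurd (aux_gammaMax_ge hm A hA j s hs fun i => ?_) (not_le.2 hγ)
    by_contra hne
    have hlt := lt_of_le_of_ne (hle i) hne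
    have : s * ∑ i, gradL Real.exp A l i * A i j < ∑ i, gradL Real.exp A l i := by
      rw [Finset.mul_sum]
      refine Finset.sum_lt_sum (fun k _ => ?_) ⟨i, Finset.mem_univ _, ?_⟩
      · have := mul_le_mul_of_nonneg_left (hle k) (aux_grad_pos hm A l k).le
        linarith
      · have := mul_lt_mul_of_pos_left hlt (aux_grad_pos hm A l i)
        linarith
    linarith
  rcases abs_choice (∑ i, gradL Real.exp A l i * A i j) with h | h
  · exact main 1 (by simp) (by linarith)
  · exact main (-1) (by simp) (by linarith)

lemma aux_exp (a x : ℝ) (hx : |x| ≤ 1) :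
    Real.exp (a * x) ≤ (1 + x)/2 * Real.exp a + (1 - x)/2 * Real.exp (-a) := by
  obtain ⟨h1, h2⟩ := abs_le.1 hx
  have := convexOn_exp.2 (Set.mem_univ a) (Set.mem_univ (-a))
    (by linarith : 0 ≤ (1+x)/2) (by linarith : 0 ≤ (1-x)/2) (by ring)
  simp only [smul_eq_mul] at this
  refine le_trans (le_of_eq ?_) this
  congr 1; ring

lemma aux_step {m n : ℕ} (hm : 0 < m) (A : Matrix (Fin m) (Fin n) ℝ) (l w : Fin n → ℝ) (a : ℝ)
    (hw : ∀ i, |A.mulVec w i| ≤ 1)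
    (h : ∑ i, gradL Real.exp A l i * A.mulVec w i = - gInf Real.exp A l) :
    gOne Real.exp A (l + a • w) ≤ gOne Real.exp A l *
      ((1 - gammaHat Real.exp A l)/2 * Real.exp a + (1 + gammaHat Real.exp A l)/2 * Real.exp (-a)) := by
  have hp := aux_gOne_pos hm A l
  have hg : gInf Real.exp A l = gammaHat Real.exp A l * gOne Real.exp A l := by
    unfold gammaHat; field_simp
  rw [hg] at h
  set g := gammaHat Real.exp A l
  calc gOne Real.exp A (l + a • w)
      = ∑ i, gradL Real.exp A l i * Real.exp (a * A.mulVec w i) := by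
        rw [aux_gOne hm]
        refine Finset.sum_congr rfl fun i _ => ?_
        simp only [gradL, Real.deriv_exp, Matrix.mulVec_add, Matrix.mulVec_smul, Pi.add_apply,
          Pi.smul_apply, smul_eq_mul, Real.exp_add]
        ring
    _ ≤ ∑ i, gradL Real.exp A l i * ((1 + A.mulVec w i)/2 * Real.exp a
          + (1 - A.mulVec w i)/2 * Real.exp (-a)) :=
        Finset.sum_le_sum fun i _ =>
          mul_le_mul_of_nonneg_left (aux_exp _ _ (hw i)) (aux_grad_pos hm A l i).le
    _ = (∑ i, gradL Real.exp A l i) * ((Real.exp a + Real.exp (-a))/2)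
          + (∑ i, gradL Real.exp A l i * A.mulVec w i) * ((Real.exp a - Real.exp (-a))/2) := by
        rw [Finset.sum_mul, Finset.sum_mul, ← Finset.sum_add_distrib]
        refine Finset.sum_congr rfl fun i _ => by ring
    _ = _ := by rw [h, ← aux_gOne hm]; ring

lemma aux_inv {m n : ℕ} (hm : 0 < m) (hn : 0 < n)
    (A : Matrix (Fin m) (Fin n) ℝ) (hA : ∀ i j, |A i j| ≤ 1)
    (ν : ℝ) (hν : ν ∈ Set.Ioc (0:ℝ) 1)
    (hγ : gammaMax A ∈ Set.Ioo (0:ℝ) 1)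
    (lam : ℕ → Fin n → ℝ) (α : ℕ → ℝ) (v : ℕ → Fin n → ℝ)
    (hseq : IsBoostSeq Real.exp A lam α v)
    (hstep : ∀ i : ℕ, 1 ≤ i → α i = (ν/2) * Real.log
      ((1 + gammaHat Real.exp A (lam (i-1))) / (1 - gammaHat Real.exp A (lam (i-1)))))
    (θ : ℝ) (hθ0 : 0 ≤ θ) (hθ : θ ≤ gammaMax A) (t : ℕ) :
    gOne Real.exp A (lam t) * Real.exp (θ * ∑ j, |lam t j|) ≤
      Real.exp (-(t:ℝ) * ν * ((gammaMax A)^2 - θ * gammaMax A * (2 + gammaMax A)) / 2) := by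
  obtain ⟨h0, h1, h2, h3⟩ := hseq
  induction t with
  | zero =>
    have : (m:ℝ) ≠ 0 := by exact_mod_cast hm.ne'
    rw [aux_gOne hm]
    simp [h0, gradL, this]
  | succ t ih =>
    have e1 := h1 (t+1) (by omega)
    obtain ⟨s, hs, j, hv⟩ := h2 (t+1) (by omega)
    have e3 := h3 (t+1) (by omega)
    have e4 := hstep (t+1) (by omega)
    simp only [Nat.add_sub_cancel] at e1 e3 e4
    have hs1 : |s| = 1 := by rcases hs with rfl | rfl <;> simp
    have hw : ∀ i, |A.mulVec (v (t+1)) i| ≤ 1 := by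
      intro i
      rw [hv, Matrix.mulVec_smul]
      simp [abs_mul, hs1, hA i j]
    have hlow := aux_weak hm A (lam t)
    have hup := aux_lt_one hm hn A hA hγ.2 (lam t)
    have hst := aux_step hm A (lam t) (v (t+1)) (α (t+1)) hw e3
    rw [← e1] at hst
    have hsc := aux_scalar hγ.1 hlow hup hθ0 hθ hν.1 hν.2
    rw [← e4] at hsc
    have hα : 0 ≤ α (t+1) := by
      rw [e4]
      refine mul_nonneg (by linarith [hν.1]) (Real.log_nonneg ?_)
      rw [one_le_div (by linarith)]
      linarith [hγ.1]
    have hnorm : ∑ k, |lam (t+1) k| ≤ (∑ k, |lam t k|) + α (t+1) := by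
      have hvn : ∑ k, |v (t+1) k| = 1 := by
        rw [hv, Finset.sum_eq_single j]
        · simp [hs1]
        · intro k _ hk; simp [hk]
        · simp
      calc ∑ k, |lam (t+1) k| ≤ ∑ k, (|lam t k| + α (t+1) * |v (t+1) k|) := by
            refine Finset.sum_le_sum fun k _ => ?_
            rw [e1]
            refine (abs_add_le _ _).trans (le_of_eq ?_)
            simp [abs_mul, abs_of_nonneg hα]
        _ = _ := by rw [Finset.sum_add_distrib, ← Finset.mul_sum, hvn, mul_one]
    have hexp : Real.exp (θ * ∑ k, |lam (t+1) k|) ≤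
        Real.exp (θ * ∑ k, |lam t k|) * Real.exp (θ * α (t+1)) := by
      rw [← Real.exp_add, ← mul_add]
      exact Real.exp_le_exp.2 (mul_le_mul_of_nonneg_left hnorm hθ0)
    have hp := aux_gOne_pos hm A (lam t)
    have hp' := aux_gOne_pos hm A (lam (t+1))
    set g := gammaHat Real.exp A (lam t)
    set E := (1 - g)/2 * Real.exp (α (t+1)) + (1 + g)/2 * Real.exp (-α (t+1)) with hE
    have hg0 : 0 < 1 - g := by linarith
    have hg1 : 0 < 1 + g := by linarith [hγ.1]
    have hE0 : 0 ≤ E := by positivity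
    calc gOne Real.exp A (lam (t+1)) * Real.exp (θ * ∑ k, |lam (t+1) k|)
        ≤ (gOne Real.exp A (lam t) * E) *
            (Real.exp (θ * ∑ k, |lam t k|) * Real.exp (θ * α (t+1))) :=
          mul_le_mul hst hexp (Real.exp_pos _).le (by positivity)
      _ = (gOne Real.exp A (lam t) * Real.exp (θ * ∑ k, |lam t k|)) *
            (E * Real.exp (θ * α (t+1))) := by ring
      _ ≤ _ := mul_le_mul ih hsc (by positivity) (Real.exp_pos _).le
      _ = _ := by
          rw [← Real.exp_add]; congr 1; push_cast; ring

/-- margin-distribution rate for AdaBoost steps with the exponential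
loss, for target margins `θ < γ/(1+γ)`; consequently `M(Aλ_t) ≥ θ` for
`θ < γ/(2+γ)` and `t` large enough. -/
theorem margin_rate_ada {m n : ℕ} (hm : 0 < m) (hn : 0 < n)
    (A : Matrix (Fin m) (Fin n) ℝ) (hA : ∀ i j, |A i j| ≤ 1)
    (ν : ℝ) (hν : ν ∈ Set.Ioc (0:ℝ) 1)
    (hγ : gammaMax A ∈ Set.Ioo (0:ℝ) 1)
    (lam : ℕ → Fin n → ℝ) (α : ℕ → ℝ) (v : ℕ → Fin n → ℝ)
    (hseq : IsBoostSeq Real.exp A lam α v)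
    (hstep : ∀ i : ℕ, 1 ≤ i → α i = (ν/2) * Real.log
      ((1 + gammaHat Real.exp A (lam (i-1))) / (1 - gammaHat Real.exp A (lam (i-1)))))
    (θ : ℝ) (hθ0 : 0 ≤ θ) (hθ : θ < gammaMax A / (1 + gammaMax A)) :
    (∀ t : ℕ, 1 ≤ t → lam t ≠ 0 →
      ((Finset.univ.filter (fun i : Fin m =>
          (-(A.mulVec (lam t) i)) / (∑ j, |lam t j|) < θ)).card : ℝ) / m ≤
        Real.exp (-(t:ℝ) * ν * ((gammaMax A)^2 - θ * gammaMax A * (2 + gammaMax A)) / 2)) ∧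
    (θ < gammaMax A / (2 + gammaMax A) →
      ∀ t : ℕ, 1 ≤ t → lam t ≠ 0 →
      2 * Real.log m / (ν * ((gammaMax A)^2 - θ * gammaMax A * (2 + gammaMax A))) < (t:ℝ) →
      margin A (lam t) ≥ θ) := by
  have hγ0 := hγ.1
  have hθγ : θ ≤ gammaMax A := by
    refine hθ.le.trans (div_le_self hγ0.le (by linarith))
  have hm' : (0:ℝ) < m := by exact_mod_cast hm
  have part1 : ∀ t : ℕ, 1 ≤ t → lam t ≠ 0 →
      ((Finset.univ.filter (fun i : Fin m =>
          (-(A.mulVec (lam t) i)) / (∑ j, |lam t j|) < θ)).card : ℝ) / m ≤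
        Real.exp (-(t:ℝ) * ν * ((gammaMax A)^2 - θ * gammaMax A * (2 + gammaMax A)) / 2) := by
    intro t _ hne
    refine le_trans ?_ (aux_inv hm hn A hA ν hν hγ lam α v hseq hstep θ hθ0 hθγ t)
    have hN : 0 < ∑ j, |lam t j| := by
      obtain ⟨j, hj⟩ := Function.ne_iff.1 hne
      exact Finset.sum_pos' (fun _ _ => abs_nonneg _) ⟨j, Finset.mem_univ _, abs_pos.2 hj⟩
    rw [aux_gOne hm, Finset.sum_mul, Finset.card_eq_sum_ones, Nat.cast_sum, Finset.sum_div,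
      Finset.sum_filter]
    refine Finset.sum_le_sum fun i _ => ?_
    split_ifs with h
    · rw [div_lt_iff₀ hN] at h
      simp only [gradL, Real.deriv_exp, Nat.cast_one]
      rw [div_mul_eq_mul_div, ← Real.exp_add]
      apply div_le_div_of_nonneg_right _ hm'.le
      exact Real.one_le_exp (by linarith)
    · exact mul_nonneg (aux_grad_pos hm A _ i).le (Real.exp_pos _).le
  refine ⟨part1, fun hθ2 t ht hne hlt => ?_⟩
  have hc : 0 < (gammaMax A)^2 - θ * gammaMax A * (2 + gammaMax A) := by
    rw [lt_div_iff₀ (by linarith)] at hθ2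
    have := mul_lt_mul_of_pos_right hθ2 hγ0
    linarith
  have hp := part1 t ht hne
  rw [div_lt_iff₀ (mul_pos hν.1 hc)] at hlt
  have hlt' : Real.exp (-(t:ℝ) * ν * ((gammaMax A)^2 - θ * gammaMax A * (2 + gammaMax A)) / 2)
      < 1 / m := by
    rw [one_div, ← Real.exp_log hm', ← Real.exp_neg]
    apply Real.exp_lt_exp.2
    linarith
  have hcard := lt_of_le_of_lt hp hlt'
  rw [div_lt_div_iff_of_pos_right hm'] at hcard
  have hcard' : (Finset.univ.filter (fun i : Fin m =>
          (-(A.mulVec (lam t) i)) / (∑ j, |lam t j|) < θ)).card = 0 := by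
    have : (Finset.univ.filter (fun i : Fin m =>
          (-(A.mulVec (lam t) i)) / (∑ j, |lam t j|) < θ)).card < 1 := by exact_mod_cast hcard
    omega
  rw [Finset.card_eq_zero, Finset.filter_eq_empty_iff] at hcard'
  have : Nonempty (Fin m) := ⟨⟨0, hm⟩⟩
  exact le_ciInf fun k => not_lt.1 (hcard' (Finset.mem_univ k))
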